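/- Half-modulus identities for S' (formulas (n8) and (n12)): Let τ lie in the complex upper half-plane and let u ∈ ℂ be such that θ₁(u,τ)·θ₄(u,τ) ≠ 0 and θ₁(u, τ/2) ≠ 0. Then (a) S'(u,τ) = 2ζ₁(u,τ) − ζ₁(u, τ/2), and (b) ℘₁(u, τ/2) − ℘₂(0, τ/2) = S'(u,τ)². -/

import Mathlib

open Complex

/-- Jacobi theta function θ₁(u,τ). -/
noncomputable def theta1 (u τ : ℂ) : ℂ :=
  -∑' k : ℤ, Complex.exp ((Real.pi : ℂ) * Complex.I * τ * ((k : ℂ) + 1/2)^2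
      + 2 * (Real.pi : ℂ) * Complex.I * (u + 1/2) * ((k : ℂ) + 1/2))

/-- Jacobi theta function θ₂(u,τ). -/
noncomputable def theta2 (u τ : ℂ) : ℂ :=
  ∑' k : ℤ, Complex.exp ((Real.pi : ℂ) * Complex.I * τ * ((k : ℂ) + 1/2)^2
      + 2 * (Real.pi : ℂ) * Complex.I * u * ((k : ℂ) + 1/2))

/-- Jacobi theta function θ₃(u,τ). -/
noncomputable def theta3 (u τ : ℂ) : ℂ :=
  ∑' k : ℤ, Complex.exp ((Real.pi : ℂ) * Complex.I * τ * (k : ℂ)^2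
      + 2 * (Real.pi : ℂ) * Complex.I * u * (k : ℂ))

/-- Jacobi theta function θ₄(u,τ). -/
noncomputable def theta4 (u τ : ℂ) : ℂ :=
  ∑' k : ℤ, Complex.exp ((Real.pi : ℂ) * Complex.I * τ * (k : ℂ)^2
      + 2 * (Real.pi : ℂ) * Complex.I * (u + 1/2) * (k : ℂ))

/-- ζ_a(u,τ) = θ_a'(u,τ)/θ_a(u,τ). -/
noncomputable def zeta1 (u τ : ℂ) : ℂ := deriv (fun v => theta1 v τ) u / theta1 u τ
noncomputable def zeta2 (u τ : ℂ) : ℂ := deriv (fun v => theta2 v τ) u / theta2 u τ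
noncomputable def zeta3 (u τ : ℂ) : ℂ := deriv (fun v => theta3 v τ) u / theta3 u τ
noncomputable def zeta4 (u τ : ℂ) : ℂ := deriv (fun v => theta4 v τ) u / theta4 u τ

/-- ℘_a(u,τ) = −∂_u ζ_a(u,τ). -/
noncomputable def wp1 (u τ : ℂ) : ℂ := -deriv (fun v => zeta1 v τ) u
noncomputable def wp2 (u τ : ℂ) : ℂ := -deriv (fun v => zeta2 v τ) u
noncomputable def wp1' (u τ : ℂ) : ℂ := deriv (fun v => wp1 v τ) u
noncomputable def wp2' (u τ : ℂ) : ℂ := deriv (fun v => wp2 v τ) u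

/-- S'(u,τ) = ζ₁(u,τ) − ζ₄(u,τ). -/
noncomputable def Sp (u τ : ℂ) : ℂ := zeta1 u τ - zeta4 u τ
/-- S''(u,τ) = ∂_u S'(u,τ). -/
noncomputable def Spp (u τ : ℂ) : ℂ := deriv (fun v => Sp v τ) u
/-- S'''(u,τ) = ∂_u S''(u,τ). -/
noncomputable def Sppp (u τ : ℂ) : ℂ := deriv (fun v => Spp v τ) u

/-- Partial derivative in the j-th coordinate of a ℂ-valued function on ℝ^N. -/
noncomputable def pdC {N : ℕ} (j : Fin N) (f : (Fin N → ℝ) → ℂ) (x : Fin N → ℝ) : ℂ :=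
  fderiv ℝ f x (Pi.single j 1)

/-- Partial derivative in the j-th coordinate of an ℝ-valued function on ℝ^d. -/
noncomputable def pd {d : ℕ} (j : Fin d) (f : (Fin d → ℝ) → ℝ) (x : Fin d → ℝ) : ℝ :=
  fderiv ℝ f x (Pi.single j 1)

lemma aux_theta3_eq (u τ : ℂ) : theta3 u τ = jacobiTheta₂ u τ := by
  unfold theta3 jacobiTheta₂ jacobiTheta₂_term
  refine tsum_congr fun k => ?_
  congr 1; ring

lemma aux_theta2_term (u τ : ℂ) (k : ℤ) :
    Complex.exp ((Real.pi : ℂ) * Complex.I * τ * ((k : ℂ) + 1/2)^2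
      + 2 * (Real.pi : ℂ) * Complex.I * u * ((k : ℂ) + 1/2)) =
    Complex.exp ((Real.pi : ℂ) * Complex.I * τ / 4 + (Real.pi : ℂ) * Complex.I * u) *
      jacobiTheta₂_term k (u + τ / 2) τ := by
  unfold jacobiTheta₂_term
  rw [← Complex.exp_add]
  congr 1; ring

lemma aux_theta2_eq (u τ : ℂ) : theta2 u τ =
    Complex.exp ((Real.pi : ℂ) * Complex.I * τ / 4 + (Real.pi : ℂ) * Complex.I * u) *
      jacobiTheta₂ (u + τ / 2) τ := by
  unfold theta2 jacobiTheta₂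
  rw [← tsum_mul_left]
  exact tsum_congr fun k => aux_theta2_term u τ k

lemma aux_theta4_eq (u τ : ℂ) : theta4 u τ = theta3 (u + 1/2) τ := rfl

lemma aux_theta1_eq (u τ : ℂ) : theta1 u τ = - theta2 (u + 1/2) τ := rfl

lemma aux_theta3_summable (u : ℂ) {τ : ℂ} (hτ : 0 < τ.im) :
    Summable (fun k : ℤ => Complex.exp ((Real.pi : ℂ) * Complex.I * τ * (k : ℂ)^2
      + 2 * (Real.pi : ℂ) * Complex.I * u * (k : ℂ))) := by
  refine ((summable_jacobiTheta₂_term_iff u τ).2 hτ).congr fun k => ?_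
  unfold jacobiTheta₂_term
  congr 1; ring

lemma aux_theta2_summable (u : ℂ) {τ : ℂ} (hτ : 0 < τ.im) :
    Summable (fun k : ℤ => Complex.exp ((Real.pi : ℂ) * Complex.I * τ * ((k : ℂ) + 1/2)^2
      + 2 * (Real.pi : ℂ) * Complex.I * u * ((k : ℂ) + 1/2))) := by
  simp_rw [aux_theta2_term]
  exact ((summable_jacobiTheta₂_term_iff _ τ).2 hτ).mul_left _

lemma aux_theta3_add_one (u τ : ℂ) : theta3 (u + 1) τ = theta3 u τ := by
  simp only [aux_theta3_eq, jacobiTheta₂_add_left]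

lemma aux_theta3_neg (u τ : ℂ) : theta3 (-u) τ = theta3 u τ := by
  simp only [aux_theta3_eq, jacobiTheta₂_neg_left]

lemma aux_theta2_add_one (u τ : ℂ) : theta2 (u + 1) τ = - theta2 u τ := by
  simp only [aux_theta2_eq]
  rw [show u + 1 + τ / 2 = u + τ / 2 + 1 by ring, jacobiTheta₂_add_left,
    show (Real.pi : ℂ) * Complex.I * τ / 4 + (Real.pi : ℂ) * Complex.I * (u + 1) =
      (Real.pi : ℂ) * Complex.I * τ / 4 + (Real.pi : ℂ) * Complex.I * u + Real.pi * Complex.I by ring,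
    Complex.exp_add _ (Real.pi * Complex.I), Complex.exp_pi_mul_I]
  ring

lemma aux_theta2_neg (u τ : ℂ) : theta2 (-u) τ = theta2 u τ := by
  unfold theta2
  rw [← (Equiv.subLeft (-1 : ℤ)).tsum_eq]
  refine tsum_congr fun k => ?_
  simp only [Equiv.subLeft_apply]
  push_cast
  congr 1; ring

lemma aux_theta4_neg (u τ : ℂ) : theta4 (-u) τ = theta4 u τ := by
  rw [aux_theta4_eq, aux_theta4_eq, ← aux_theta3_neg, ← aux_theta3_add_one]
  congr 1; ring

lemma aux_theta1_neg (u τ : ℂ) : theta1 (-u) τ = - theta1 u τ := by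
  rw [aux_theta1_eq, aux_theta1_eq, ← aux_theta2_neg, ← aux_theta2_add_one, neg_neg]
  congr 1; ring

lemma aux_theta1_zero (τ : ℂ) : theta1 0 τ = 0 := by
  have := aux_theta1_neg 0 τ
  rw [neg_zero] at this
  exact self_eq_neg.1 this

lemma aux_theta2_diff {τ : ℂ} (hτ : 0 < τ.im) : Differentiable ℂ (fun v => theta2 v τ) := by
  intro u
  simp only [aux_theta2_eq]
  have h := differentiableAt_jacobiTheta₂_fst (u + τ / 2) hτ
  have h' : DifferentiableAt ℂ (fun v => jacobiTheta₂ (v + τ / 2) τ) u :=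
    DifferentiableAt.comp u (f := fun v => v + τ / 2) h (by fun_prop)
  exact DifferentiableAt.mul (by fun_prop) h'

lemma aux_theta1_diff {τ : ℂ} (hτ : 0 < τ.im) : Differentiable ℂ (fun v => theta1 v τ) := by
  simp only [aux_theta1_eq]
  exact ((aux_theta2_diff hτ).comp (f := fun v => v + 1/2) (by fun_prop)).neg

lemma aux_theta4_diff {τ : ℂ} (hτ : 0 < τ.im) : Differentiable ℂ (fun v => theta4 v τ) := by
  simp only [aux_theta4_eq, aux_theta3_eq]
  have : Differentiable ℂ (fun v => jacobiTheta₂ v τ) :=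
    fun u => differentiableAt_jacobiTheta₂_fst u hτ
  exact this.comp (f := fun v => v + 1/2) (by fun_prop)

/-- The basic product formula from modulus `h` to modulus `2h`. -/
lemma aux_prod (a b : ℂ) {h : ℂ} (hh : 0 < h.im) :
    theta2 a h * theta2 b h =
      theta3 (a + b) (2 * h) * theta2 (a - b) (2 * h)
      + theta2 (a + b) (2 * h) * theta3 (a - b) (2 * h) := by
  have hh2 : 0 < (2 * h).im := by simpa using hh
  set F : ℤ × ℤ → ℂ := fun p =>
    Complex.exp ((Real.pi : ℂ) * Complex.I * h * ((p.1 : ℂ) + 1/2)^2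
      + 2 * (Real.pi : ℂ) * Complex.I * a * ((p.1 : ℂ) + 1/2)) *
    Complex.exp ((Real.pi : ℂ) * Complex.I * h * ((p.2 : ℂ) + 1/2)^2
      + 2 * (Real.pi : ℂ) * Complex.I * b * ((p.2 : ℂ) + 1/2)) with hF
  have hmul : ∀ {f g : ℤ → ℂ}, Summable f → Summable g →
      HasSum (fun p : ℤ × ℤ => f p.1 * g p.2) ((∑' k, f k) * ∑' k, g k) := by
    intro f g hf hg
    have hs := summable_mul_of_summable_norm hf.norm hg.norm
    rw [tsum_mul_tsum_of_summable_norm hf.norm hg.norm]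
    exact hs.hasSum
  have H0 : HasSum F (theta2 a h * theta2 b h) :=
    hmul (aux_theta2_summable a hh) (aux_theta2_summable b hh)
  have H1 := hmul (aux_theta3_summable (a + b) hh2) (aux_theta2_summable (a - b) hh2)
  have H2 := hmul (aux_theta2_summable (a + b) hh2) (aux_theta3_summable (a - b) hh2)
  let e1 : ℤ × ℤ → ℤ × ℤ := fun p => (p.1 + p.2, p.1 - 1 - p.2)
  let e2 : ℤ × ℤ → ℤ × ℤ := fun p => (p.1 + p.2, p.1 - p.2)
  have i1 : Function.Injective e1 := by
    rintro ⟨p, q⟩ ⟨p', q'⟩ h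
    simp only [e1, Prod.mk.injEq] at h ⊢
    omega
  have i2 : Function.Injective e2 := by
    rintro ⟨p, q⟩ ⟨p', q'⟩ h
    simp only [e2, Prod.mk.injEq] at h ⊢
    omega
  have hc : IsCompl (Set.range e1) (Set.range e2) := by
    rw [isCompl_iff, Set.disjoint_iff, codisjoint_iff]
    constructor
    · rintro x ⟨⟨⟨p, q⟩, rfl⟩, ⟨⟨p', q'⟩, h⟩⟩
      simp only [e1, e2, Prod.mk.injEq] at h
      exact (by omega : False)
    · refine Set.eq_univ_of_forall ?_
      rintro ⟨m, n⟩
      rcases Int.even_or_odd' (m + n) with ⟨c, hc | hc⟩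
      · right
        refine ⟨(c, m - c), ?_⟩
        simp only [e2, Prod.mk.injEq]; omega
      · left
        refine ⟨(c + 1, m - c - 1), ?_⟩
        simp only [e1, Prod.mk.injEq]; omega
  have K1 : HasSum (F ∘ e1) (theta3 (a + b) (2 * h) * theta2 (a - b) (2 * h)) := by
    have H1' : HasSum _ (theta3 (a + b) (2 * h) * theta2 (a - b) (2 * h)) := H1
    convert H1' using 1
    funext p
    simp only [hF, e1, Function.comp_apply, ← Complex.exp_add]
    push_cast
    congr 1; ring
  have K2 : HasSum (F ∘ e2) (theta2 (a + b) (2 * h) * theta3 (a - b) (2 * h)) := by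
    have H2' : HasSum _ (theta2 (a + b) (2 * h) * theta3 (a - b) (2 * h)) := H2
    convert H2' using 1
    funext p
    simp only [hF, e2, Function.comp_apply, ← Complex.exp_add]
    push_cast
    congr 1; ring
  have K := HasSum.add_isCompl hc (i1.hasSum_range_iff.2 K1) (i2.hasSum_range_iff.2 K2)
  exact H0.unique K

lemma aux_prod12 (x y : ℂ) {h : ℂ} (hh : 0 < h.im) :
    theta1 x h * theta2 y h =
      theta4 (x + y) (2 * h) * theta1 (x - y) (2 * h)
      + theta1 (x + y) (2 * h) * theta4 (x - y) (2 * h) := by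
  simp only [aux_theta1_eq, aux_theta4_eq]
  have := aux_prod (x + 1/2) y hh
  rw [show x + 1/2 + y = x + y + 1/2 by ring, show x + 1/2 - y = x - y + 1/2 by ring] at this
  linear_combination - this

lemma aux_prod11 (x y : ℂ) {h : ℂ} (hh : 0 < h.im) :
    theta1 x h * theta1 y h =
      theta3 (x + y) (2 * h) * theta2 (x - y) (2 * h)
      - theta2 (x + y) (2 * h) * theta3 (x - y) (2 * h) := by
  simp only [aux_theta1_eq]
  have := aux_prod (x + 1/2) (y + 1/2) hh
  rw [show x + 1/2 + (y + 1/2) = x + y + 1 by ring, show x + 1/2 - (y + 1/2) = x - y by ring,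
    aux_theta3_add_one, aux_theta2_add_one] at this
  linear_combination this

lemma aux_prod14 (x y : ℂ) {h : ℂ} (hh : 0 < h.im) :
    2 * (theta1 (x + y) (2 * h) * theta4 (x - y) (2 * h)) =
      theta1 x h * theta2 y h + theta2 x h * theta1 y h := by
  have A := aux_prod12 x y hh
  have B := aux_prod12 y x hh
  rw [show y - x = -(x - y) by ring, aux_theta1_neg, aux_theta4_neg, add_comm y x] at B
  linear_combination - A - B

lemma aux_addition (x y : ℂ) {h : ℂ} (hh : 0 < h.im) :
    theta1 (x + y) h * theta1 (x - y) h * theta2 0 h ^ 2 =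
      theta1 x h ^ 2 * theta2 y h ^ 2 - theta2 x h ^ 2 * theta1 y h ^ 2 := by
  have a0 := aux_prod11 (x + y) (x - y) hh
  have a1 := aux_prod11 x x hh
  have a2 := aux_prod11 y y hh
  have b1 := aux_prod x x hh
  have b2 := aux_prod y y hh
  have b0 := aux_prod 0 0 hh
  rw [show x + y + (x - y) = x + x by ring, show x + y - (x - y) = y + y by ring] at a0
  simp only [sub_self, add_zero] at a1 a2 b1 b2 b0
  simp only [pow_two]
  rw [a0, a1, a2, b1, b2, b0]
  ring

lemma aux_deriv_even {f : ℂ → ℂ} (hf : ∀ x, f (-x) = f x) : deriv f 0 = 0 := by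
  have h : deriv (fun x => f (-x)) 0 = - deriv f (-0) := deriv_comp_neg f 0
  rw [funext hf, neg_zero] at h
  exact self_eq_neg.1 h

lemma aux_deriv_diff {f : ℂ → ℂ} (hf : Differentiable ℂ f) : Differentiable ℂ (deriv f) := by
  rw [← differentiableOn_univ] at hf ⊢
  exact hf.deriv isOpen_univ

lemma aux_wronsk (x : ℂ) {h : ℂ} (hh : 0 < h.im) :
    2 * (deriv (fun v => theta1 v (2 * h)) x * theta4 x (2 * h)
      - theta1 x (2 * h) * deriv (fun v => theta4 v (2 * h)) x) =
      theta2 x h * deriv (fun v => theta1 v h) 0 := by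
  have hh2 : 0 < (2 * h).im := by simpa using hh
  have e : (fun y => 2 * (theta1 (x + y) (2 * h) * theta4 (x - y) (2 * h))) =
      fun y => theta1 x h * theta2 y h + theta2 x h * theta1 y h :=
    funext fun y => aux_prod14 x y hh
  have d1 : HasDerivAt (fun y => theta1 (x + y) (2 * h))
      (deriv (fun v => theta1 v (2 * h)) x) 0 := by
    have := ((aux_theta1_diff hh2) (x + 0)).hasDerivAt.comp_const_add x 0
    simpa using this
  have d4 : HasDerivAt (fun y => theta4 (x - y) (2 * h))
      (- deriv (fun v => theta4 v (2 * h)) x) 0 := by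
    have := ((aux_theta4_diff hh2) (x - 0)).hasDerivAt.comp_const_sub x 0
    simpa using this
  have L := (d1.mul d4).const_mul 2
  have R := (((aux_theta2_diff hh) 0).hasDerivAt.const_mul (theta1 x h)).add
    (((aux_theta1_diff hh) 0).hasDerivAt.const_mul (theta2 x h))
  have z : deriv (fun v => theta2 v h) 0 = 0 := aux_deriv_even fun v => aux_theta2_neg v h
  have := L.unique (R.congr_of_eventuallyEq (Filter.Eventually.of_forall fun y => congrFun e y))
  simp only [add_zero, sub_zero, z] at this
  linear_combination this

lemma aux_second {f g : ℂ → ℂ} (hf : Differentiable ℂ f) (hg : Differentiable ℂ g) (x : ℂ)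
    (f0 : f 0 = 0) (g0 : deriv g 0 = 0)
    (H : ∀ y, f (x + y) * f (x - y) * g 0 ^ 2 = f x ^ 2 * g y ^ 2 - g x ^ 2 * f y ^ 2) :
    (deriv (deriv f) x * f x - deriv f x ^ 2) * g 0 ^ 2 =
      f x ^ 2 * (g 0 * deriv (deriv g) 0) - g x ^ 2 * deriv f 0 ^ 2 := by
  have hf' := aux_deriv_diff hf
  have hg' := aux_deriv_diff hg
  have p : ∀ {k : ℂ → ℂ}, Differentiable ℂ k → ∀ y,
      HasDerivAt (fun y => k (x + y)) (deriv k (x + y)) y :=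
    fun hk y => (hk (x + y)).hasDerivAt.comp_const_add x y
  have m : ∀ {k : ℂ → ℂ}, Differentiable ℂ k → ∀ y,
      HasDerivAt (fun y => k (x - y)) (- deriv k (x - y)) y :=
    fun hk y => (hk (x - y)).hasDerivAt.comp_const_sub x y
  have H1 : ∀ y, (deriv f (x + y) * f (x - y) - f (x + y) * deriv f (x - y)) * g 0 ^ 2 =
      f x ^ 2 * (2 * (g y * deriv g y)) - g x ^ 2 * (2 * (f y * deriv f y)) := by
    intro y
    have L := ((p hf y).mul (m hf y)).mul_const (g 0 ^ 2)
    have R := (((hg y).hasDerivAt.pow 2).const_mul (f x ^ 2)).sub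
      (((hf y).hasDerivAt.pow 2).const_mul (g x ^ 2))
    have := L.unique (R.congr_of_eventuallyEq (Filter.Eventually.of_forall H))
    simp only [Nat.cast_ofNat] at this
    linear_combination this
  have L := (((p hf' 0).mul (m hf 0)).sub ((p hf 0).mul (m hf' 0))).mul_const (g 0 ^ 2)
  have R := ((((hg 0).hasDerivAt.mul (hg' 0).hasDerivAt).const_mul 2).const_mul (f x ^ 2)).sub
    ((((hf 0).hasDerivAt.mul (hf' 0).hasDerivAt).const_mul 2).const_mul (g x ^ 2))
  have := L.unique (R.congr_of_eventuallyEq (Filter.Eventually.of_forall H1))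
  simp only [add_zero, sub_zero, f0, g0] at this
  linear_combination this / 2

lemma aux_logderiv {f : ℂ → ℂ} (hf : Differentiable ℂ f) (x : ℂ) (hx : f x ≠ 0) :
    deriv (fun v => deriv f v / f v) x = (deriv (deriv f) x * f x - deriv f x ^ 2) / f x ^ 2 := by
  have := ((aux_deriv_diff hf x).hasDerivAt.div (hf x).hasDerivAt hx).deriv
  rw [pow_two (deriv f x)]
  exact this

/-- Half-modulus identities for S' (formulas (n8) and (n12)):
(a) S'(u,τ) = 2ζ₁(u,τ) − ζ₁(u,τ/2); (b) ℘₁(u,τ/2) − ℘₂(0,τ/2) = S'(u,τ)². -/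
theorem Sp_half_modulus (τ u : ℂ) (hτ : 0 < τ.im)
    (h1 : theta1 u τ * theta4 u τ ≠ 0)
    (h2 : theta1 u (τ / 2) ≠ 0) :
    Sp u τ = 2 * zeta1 u τ - zeta1 u (τ / 2)
    ∧ wp1 u (τ / 2) - wp2 0 (τ / 2) = Sp u τ ^ 2 := by
  obtain ⟨h, rfl⟩ : ∃ h, τ = 2 * h := ⟨τ / 2, by ring⟩
  rw [show 2 * h / 2 = h by ring] at *
  have hh : 0 < h.im := by simpa using hτ
  have n1 := left_ne_zero_of_mul h1
  have n4 := right_ne_zero_of_mul h1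
  have P : ∀ v, 2 * (theta1 v (2 * h) * theta4 v (2 * h)) = theta1 v h * theta2 0 h := by
    intro v
    have := aux_prod14 v 0 hh
    simpa [aux_theta1_zero] using this
  have c0 : theta2 0 h ≠ 0 := by
    intro hc
    have := P u
    rw [hc, mul_zero] at this
    exact h1 (by simpa using this)
  have D : 2 * (deriv (fun v => theta1 v (2 * h)) u * theta4 u (2 * h)
      + theta1 u (2 * h) * deriv (fun v => theta4 v (2 * h)) u) =
      deriv (fun v => theta1 v h) u * theta2 0 h := by
    have L := ((aux_theta1_diff hτ u).hasDerivAt.mul (aux_theta4_diff hτ u).hasDerivAt).const_mul 2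
    have R := (aux_theta1_diff hh u).hasDerivAt.mul_const (theta2 0 h)
    exact L.unique (R.congr_of_eventuallyEq (Filter.Eventually.of_forall P))
  have W := aux_wronsk u hh
  have Pu := P u
  have S := aux_second (aux_theta1_diff hh) (aux_theta2_diff hh) u (aux_theta1_zero h)
    (aux_deriv_even fun v => aux_theta2_neg v h) (fun y => aux_addition u y hh)
  have hS : Sp u (2 * h) = theta2 u h * deriv (fun v => theta1 v h) 0 /
      (theta1 u h * theta2 0 h) := by
    rw [← W, ← Pu]
    unfold Sp zeta1 zeta4
    field_simp
  have hZ : zeta1 u h = zeta1 u (2 * h) + zeta4 u (2 * h) := by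
    have : zeta1 u h = (deriv (fun v => theta1 v h) u * theta2 0 h) / (theta1 u h * theta2 0 h) := by
      unfold zeta1
      field_simp
    rw [this, ← D, ← Pu]
    unfold zeta1 zeta4
    field_simp
  constructor
  · rw [hZ]; unfold Sp; ring
  · rw [hS]
    unfold wp1 wp2 zeta1 zeta2
    rw [aux_logderiv (aux_theta1_diff hh) u h2, aux_logderiv (aux_theta2_diff hh) 0 c0,
      aux_deriv_even (f := fun v => theta2 v h) fun v => aux_theta2_neg v h]
    field_simp
    linear_combination - S
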